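/- Let G be a finite r-regular graph with girth g, equipped with a random label assignment with probabilities (p₀,p), and let N be a nonnegative integer with 2(N+2) < g−2. Then for any vertex u and any 0 ≤ k ≤ r, the conditional probability that exactly k of the r neighbours of u lie in W_N, given u ∈ W_N, equals C(r,k)·(q_N/w_N)^k·(1 − q_N/w_N)^{r−k}; that is, conditional on u being white at time N, the number of white neighbours of u at time N has the binomial distribution Bin(r, q_N/w_N). -/

import Mathlib

open MeasureTheory ProbabilityTheory Filter Set

namespace InducedForest

variable {V : Type*}

/-- Label `i` is *relevant* for vertex `v` (w.r.t. the label assignment `S`):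
either `i = 0` and `0 ∈ S v`, or `i ∈ S v`, no `j < i` is relevant for `v`, and
there is a unique neighbour of `v` having a relevant label strictly smaller than `i`. -/
def Relevant (G : SimpleGraph V) (S : V → Set ℕ) (i : ℕ) : V → Prop :=
  Nat.strongRecOn i (fun i ih v =>
    (i = 0 ∧ 0 ∈ S v) ∨
    (i ∈ S v ∧ (∀ j, (h : j < i) → ¬ ih j h v) ∧
      (∃! u, G.Adj v u ∧ ∃ j, ∃ h : j < i, ih j h u)))

/-- `v` has some relevant label `≤ l`, i.e. `v ∈ R_{≤ l}`. -/
def RelevantLe (G : SimpleGraph V) (S : V → Set ℕ) (l : ℕ) (v : V) : Prop :=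
  ∃ i ≤ l, Relevant G S i v

inductive Colour | white | blue | orange | purple
deriving DecidableEq

open Classical in
/-- The colour of `u` at time `l`. -/
noncomputable def colourAt (G : SimpleGraph V) (S : V → Set ℕ) (l : ℕ) (u : V) : Colour :=
  if RelevantLe G S l u then Colour.purple
  else if ∀ v, G.Adj u v → ¬ RelevantLe G S l v then Colour.white
  else if ∃! v, G.Adj u v ∧ RelevantLe G S l v then Colour.blue
  else Colour.orange

/-- The set `W_l` of white vertices at time `l`. -/
def White (G : SimpleGraph V) (S : V → Set ℕ) (l : ℕ) : Set V :=
  {u | ¬ RelevantLe G S l u ∧ ∀ v, G.Adj u v → ¬ RelevantLe G S l v}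

/-- The set `B_l` of blue vertices at time `l`. -/
def Blue (G : SimpleGraph V) (S : V → Set ℕ) (l : ℕ) : Set V :=
  {u | ¬ RelevantLe G S l u ∧ ∃! v, G.Adj u v ∧ RelevantLe G S l v}
/-- The label assignment determined by a sample point `ω`. -/
def labels (ω : V → ℕ → Bool) : V → Set ℕ := fun v => {i | ω v i = true}

/-- `μ` is the random label assignment with probabilities `(p₀, p)`: the events
`i ∈ S(v)` are mutually independent, and each has probability `p₀` if `i = 0`
and `p` if `i ≥ 1`. -/
def IsLabelMeasure (μ : Measure (V → ℕ → Bool)) (p₀ p : ℝ) : Prop :=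
  IsProbabilityMeasure μ ∧
  iIndepSet (fun q : V × ℕ => {ω : V → ℕ → Bool | ω q.1 q.2 = true}) μ ∧
  ∀ (v : V) (i : ℕ), μ {ω | ω v i = true} = ENNReal.ofReal (if i = 0 then p₀ else p)

/-- Event that `u` is white at time `l`. -/
def WEv (G : SimpleGraph V) (l : ℕ) (u : V) : Set (V → ℕ → Bool) :=
  {ω | u ∈ White G (labels ω) l}

/-- Event that `u` is blue at time `l`. -/
def BEv (G : SimpleGraph V) (l : ℕ) (u : V) : Set (V → ℕ → Bool) :=
  {ω | u ∈ Blue G (labels ω) l}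

/-- Event that `u` has relevant label `i`, i.e. `u ∈ R_i`. -/
def REv (G : SimpleGraph V) (i : ℕ) (u : V) : Set (V → ℕ → Bool) :=
  {ω | Relevant G (labels ω) i u}

/-- Event that `u` has a relevant label `≤ l`, i.e. `u ∈ R_{≤ l}`. -/
def RLeEv (G : SimpleGraph V) (l : ℕ) (u : V) : Set (V → ℕ → Bool) :=
  {ω | RelevantLe G (labels ω) l u}

/-- `G` is `r`-regular. -/
def IsRegular (G : SimpleGraph V) (r : ℕ) : Prop :=
  ∀ v : V, (G.neighborSet v).ncard = r

/-!
As long as a vertex has no relevant label it does not influence its neighbours: each of them evolves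
as it would in its own branch away from that vertex. By the girth assumption the branches at the
neighbours of `u` are disjoint up to the relevant depth, so their evolutions are independent. In
these terms `u` is white iff `0 ∉ S(u)` and no neighbour is relevant in its branch away from `u`.
This is a product event, and conditioning a product measure on a product event preserves
independence. Given that `u` is white, whether a neighbour is white too is decided inside its
branch; by induction on time the evolution of a branch has the same law for all edges, so the
conditional probability is the same for every neighbour, namely `q_N / w_N`.
-/

variable {G : SimpleGraph V} {g : ℕ}

section Deterministic

variable {S : V → Set ℕ} {m n : ℕ} {u v : V}

theorem relevant_iff {i : ℕ} :
    Relevant G S i v ↔ (i = 0 ∧ 0 ∈ S v) ∨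
      (i ∈ S v ∧ (∀ j < i, ¬ Relevant G S j v) ∧ ∃! w, G.Adj v w ∧ ∃ j < i, Relevant G S j w) := by
  simp_rw [← exists_prop (a := _ < _)]
  unfold Relevant
  rw [Nat.strongRecOn_eq]

theorem RelevantLe.mono (h : m ≤ n) (hv : RelevantLe G S m v) : RelevantLe G S n v :=
  hv.imp fun _ hi => ⟨hi.1.trans h, hi.2⟩

theorem relevantLe_zero : RelevantLe G S 0 v ↔ 0 ∈ S v := by
  simp only [RelevantLe, nonpos_iff_eq_zero, exists_eq_left]
  rw [relevant_iff]
  simp +contextual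

theorem relevantLe_succ :
    RelevantLe G S (n + 1) v ↔ RelevantLe G S n v ∨
      (n + 1 ∈ S v ∧ ∃! w, G.Adj v w ∧ RelevantLe G S n w) := by
  have relevant_succ : Relevant G S (n + 1) v ↔
      n + 1 ∈ S v ∧ ¬ RelevantLe G S n v ∧ ∃! w, G.Adj v w ∧ RelevantLe G S n w := by
    rw [relevant_iff]
    simp [RelevantLe, Order.lt_add_one_iff]
  have le_succ : RelevantLe G S (n + 1) v ↔ RelevantLe G S n v ∨ Relevant G S (n + 1) v := by
    simp [RelevantLe, Nat.le_succ_iff, or_and_right, exists_or]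
  rw [le_succ, relevant_succ]
  tauto

variable (G S) in
/-- `BranchRelevant G S n u v`: the vertex `v` acquires a relevant label `≤ n` in the branch at `v`
away from its neighbour `u`, that is, when `u` is ignored. As long as `u` itself has no relevant
label this is the same as `RelevantLe G S n v` (`relevantLe_iff_branchRelevant`), but it only
depends on the labels in that branch. -/
def BranchRelevant : ℕ → V → V → Prop
  | 0, _, v => 0 ∈ S v
  | n + 1, u, v => BranchRelevant n u v ∨
      (n + 1 ∈ S v ∧ ∃! w : ↥(G.neighborSet v \ {u}), BranchRelevant n v w)

theorem BranchRelevant.mono (h : m ≤ n) (hv : BranchRelevant G S m u v) :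
    BranchRelevant G S n u v := by
  induction h with
  | refl => exact hv
  | step _ ih => exact Or.inl ih

theorem relevantLe_iff_branchRelevant (huv : G.Adj u v) (hu : ¬ RelevantLe G S n u) :
    RelevantLe G S n v ↔ BranchRelevant G S n u v := by
  induction n generalizing u v with
  | zero => exact relevantLe_zero
  | succ n ih =>
    replace hu := mt (RelevantLe.mono n.le_succ) hu
    rw [relevantLe_succ, BranchRelevant, ← ih huv hu]
    refine or_congr_right' fun hv => and_congr_right' ?_
    have children : ∀ w, G.Adj v w ∧ RelevantLe G S n w ↔
        w ∈ G.neighborSet v \ {u} ∧ BranchRelevant G S n v w := fun w => by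
      rw [Set.mem_sdiff, SimpleGraph.mem_neighborSet, mem_singleton_iff, and_assoc]
      refine and_congr_right fun hvw => ?_
      rw [← ih hvw hv]
      exact (and_iff_right_of_imp fun hw (hwu : w = u) => hu (hwu ▸ hw)).symm
    simp only [children, ExistsUnique, Subtype.exists, Subtype.forall, Subtype.mk.injEq, and_imp,
      exists_prop, and_assoc]

variable (G S) in
/-- The vertex `v` has no label `0` and none of its neighbours in `s` becomes relevant by time `n`
in its branch away from `v`. For `s` the whole neighbourhood of `v` this says that `v` is white
(`mem_white_iff_quiet`), and for `s` the neighbourhood of `v` with a white vertex `u` removed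
it says that `v` is white as well (`mem_white_iff_quiet_of_adj`). -/
def Quiet (n : ℕ) (v : V) (s : Set V) : Prop :=
  0 ∉ S v ∧ ∀ w : s, ¬ BranchRelevant G S n v w

theorem Quiet.not_branchRelevant_succ (h : Quiet G S n v (G.neighborSet v \ {u})) :
    ¬ BranchRelevant G S (n + 1) u v := by
  suffices ∀ m ≤ n + 1, ¬ BranchRelevant G S m u v from this _ le_rfl
  intro m hm
  induction m with
  | zero => exact h.1
  | succ m ih =>
    rintro (hv | ⟨_, w, hw, _⟩)
    · exact ih (by lia) hv
    · exact h.2 w (hw.mono (by lia))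

theorem Quiet.not_relevantLe (h : Quiet G S n v (G.neighborSet v)) : ¬ RelevantLe G S n v := by
  suffices ∀ m ≤ n, ¬ RelevantLe G S m v from this _ le_rfl
  intro m hm
  induction m with
  | zero => exact mt relevantLe_zero.1 h.1
  | succ m ih =>
    have hv := ih (by lia)
    rw [relevantLe_succ]
    rintro (hv' | ⟨_, w, ⟨hvw, hw⟩, _⟩)
    · exact hv hv'
    · exact h.2 ⟨w, hvw⟩ (((relevantLe_iff_branchRelevant hvw hv).1 hw).mono (by lia))

theorem mem_white_iff_quiet : u ∈ White G S n ↔ Quiet G S n u (G.neighborSet u) := by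
  refine ⟨fun ⟨hu, hnbr⟩ => ⟨fun h => hu ((relevantLe_zero.2 h).mono n.zero_le), fun w hw => ?_⟩,
    fun h => ⟨h.not_relevantLe, fun w huw hw => ?_⟩⟩
  · exact hnbr w w.2 ((relevantLe_iff_branchRelevant w.2 hu).2 hw)
  · exact h.2 ⟨w, huw⟩ ((relevantLe_iff_branchRelevant huw h.not_relevantLe).1 hw)

theorem mem_white_iff_quiet_of_adj (huv : G.Adj u v) (hu : u ∈ White G S n) :
    v ∈ White G S n ↔ Quiet G S n v (G.neighborSet v \ {u}) := by
  have hv : ¬ RelevantLe G S n v := hu.2 v huv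
  refine ⟨fun h => ?_, fun h => ⟨hv, fun w hvw hw => ?_⟩⟩
  · have hq := mem_white_iff_quiet.1 h
    exact ⟨hq.1, fun w => hq.2 ⟨w, w.2.1⟩⟩
  · obtain rfl | hwu := eq_or_ne w u
    · exact hu.1 hw
    · exact h.2 ⟨w, hvw, hwu⟩ ((relevantLe_iff_branchRelevant hvw hv).1 hw)

end Deterministic

section Girth

variable {m n : ℕ} {u v w : V}

theorem path_unique_of_girth (hg : (g : ℕ∞) ≤ G.egirth) {x y : V} {p q : G.Walk x y}
    (hp : p.IsPath) (hq : q.IsPath) (h : p.length + q.length < g) : p = q := by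
  by_contra hne
  obtain ⟨w, _, _, c, hc, hlen⟩ := hp.exists_isCycle_length_le_add_of_ne hq hne
  have hgc : (g : ℕ∞) ≤ c.length := SimpleGraph.le_egirth.1 hg w c hc
  exact absurd (Nat.cast_le.1 hgc) (by lia)

/-- The vertices that can be reached from `v` by a path of length at most `n` avoiding `u`: the
first `n` generations of the branch at `v` away from `u`. -/
def branch (G : SimpleGraph V) (n : ℕ) (u v : V) : Set V :=
  {x | ∃ p : G.Walk v x, p.IsPath ∧ u ∉ p.support ∧ p.length ≤ n}

theorem branch_mono (h : m ≤ n) : branch G m u v ⊆ branch G n u v :=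
  fun _ ⟨p, hp, hu, hlen⟩ => ⟨p, hp, hu, hlen.trans h⟩

theorem self_mem_branch (h : u ≠ v) : v ∈ branch G n u v :=
  ⟨.nil, .nil, by simpa using h, n.zero_le⟩

theorem notMem_branch : u ∉ branch G n u v :=
  fun ⟨p, _, hu, _⟩ => hu p.end_mem_support

theorem branch_subset_branch_succ (hg : (g : ℕ∞) ≤ G.egirth) (hn : n + 2 < g)
    (huv : G.Adj u v) (hw : w ∈ G.neighborSet v \ {u}) :
    branch G n v w ⊆ branch G (n + 1) u v := by
  classical
  rintro x ⟨p, hp, hv, hlen⟩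
  have hvw : G.Adj v w := hw.1
  refine ⟨.cons hvw p, hp.cons hv, ?_, by simpa using hlen⟩
  rw [SimpleGraph.Walk.support_cons, List.mem_cons, not_or]
  refine ⟨huv.ne, fun hu => hw.2 ?_⟩
  -- Otherwise the path continues to `u`, in competition with the edge `v u`.
  have hpath : (SimpleGraph.Walk.cons hvw (p.takeUntil u hu)).IsPath :=
    (hp.takeUntil hu).cons fun h => hv (p.support_takeUntil_subset_support hu h)
  have hedge : (SimpleGraph.Walk.cons huv.symm .nil).IsPath := by simp [huv.ne']
  have hlen' := p.length_takeUntil_le_length hu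
  have heq := path_unique_of_girth hg hpath hedge (by simp; lia)
  exact (SimpleGraph.Walk.cons.inj heq).1

theorem disjoint_branch (hg : (g : ℕ∞) ≤ G.egirth) (hn : 2 * n + 2 < g)
    (huv : G.Adj u v) (huw : G.Adj u w) (hvw : v ≠ w) :
    Disjoint (branch G n u v) (branch G n u w) := by
  rw [Set.disjoint_left]
  rintro x ⟨p, hp, hup, hplen⟩ ⟨q, hq, huq, hqlen⟩
  have heq := path_unique_of_girth hg (hp.cons (h := huv) hup) (hq.cons (h := huw) huq)
    (by simp; lia)
  exact hvw (SimpleGraph.Walk.cons.inj heq).1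

end Girth

section Independence

variable {Ω ι κ : Type*} {m₀ : MeasurableSpace Ω} {μ : Measure Ω}

theorem iIndep_iSup_of_pairwise_disjoint {m : ι → MeasurableSpace Ω} (hle : ∀ i, m i ≤ m₀)
    (hm : iIndep m μ) {S : κ → Set ι} (hS : Pairwise (Function.onFun Disjoint S)) :
    iIndep (fun k => ⨆ i ∈ S k, m i) μ := by
  classical
  rw [iIndep_iff]
  intro s
  induction s using Finset.induction_on with
  | empty =>
    have := hm.isProbabilityMeasure
    simp
  | insert k s hk ih =>
    intro A hA
    rw [Finset.set_biInter_insert, Finset.prod_insert hk,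
      ← ih fun l hl => hA l (Finset.mem_insert_of_mem hl)]
    have hdisj : Disjoint (S k) (⋃ l ∈ s, S l) :=
      disjoint_iUnion₂_right.2 fun l hl => hS fun hkl => hk (hkl ▸ hl)
    refine (Indep_iff _ _ μ).1 (indep_iSup_of_disjoint hle hm hdisj) _ _
      (hA k (Finset.mem_insert_self k s)) ?_
    refine @Finset.measurableSet_biInter _ _ (_) _ _ fun l hl => ?_
    have hle : ⨆ i ∈ S l, m i ≤ ⨆ i ∈ ⋃ l ∈ s, S l, m i :=
      biSup_mono fun i hi => mem_biUnion hl hi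
    exact hle _ (hA l (Finset.mem_insert_of_mem hl))

theorem iIndepFun_curry {α : Type*} [MeasurableSpace α] {X : ι → κ → Ω → α}
    (hX : ∀ i j, Measurable (X i j)) (hindep : iIndepFun (fun q : ι × κ => X q.1 q.2) μ) :
    iIndepFun (fun i ω j => X i j ω) μ := by
  have fibres : Pairwise (Function.onFun Disjoint fun i : ι => {q : ι × κ | q.1 = i}) :=
    fun i j hij => Set.disjoint_left.2 fun q hi hj => hij (hi.symm.trans hj)
  rw [iIndepFun_iff_iIndep] at hindep ⊢
  refine iIndep_of_iIndep_of_le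
    (iIndep_iSup_of_pairwise_disjoint (fun q => (hX q.1 q.2).comap_le) hindep fibres) fun i => ?_
  rw [MeasurableSpace.pi, MeasurableSpace.comap_iSup]
  refine iSup_le fun j => ?_
  rw [MeasurableSpace.comap_comp]
  exact le_iSup₂_of_le (i, j) rfl le_rfl

end Independence

/-- The label sets `S(v)` of the vertices are independent and identically distributed. Within a
single vertex the labels may depend on each other in an arbitrary way. -/
structure IsIIDLabelMeasure (μ : Measure (V → ℕ → Bool)) : Prop where
  iIndepFun_eval : iIndepFun (fun v ω => ω v) μ
  identDistrib_eval : ∀ v w, IdentDistrib (fun ω => ω v) (fun ω => ω w) μ μ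

section IsLabelMeasure

variable {μ : Measure (V → ℕ → Bool)} {p₀ p : ℝ}

theorem IsLabelMeasure.iIndepFun_label (hμ : IsLabelMeasure μ p₀ p) :
    iIndepFun (fun (q : V × ℕ) ω => ω q.1 q.2) μ := by
  rw [iIndepFun_iff_iIndep]
  refine iIndep_of_iIndep_of_le ((iIndepSet_iff_iIndep _ _).1 hμ.2.1) fun q => ?_
  rw [← measurable_iff_comap_le]
  refine @measurable_to_bool _ (_) _ ?_
  exact MeasurableSpace.measurableSet_generateFrom rfl

theorem IsLabelMeasure.identDistrib_label (hμ : IsLabelMeasure μ p₀ p) (v w : V) (i : ℕ) :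
    IdentDistrib (fun ω => ω v i) (fun ω => ω w i) μ μ := by
  have := hμ.1
  have hmeas (x : V) : Measurable fun ω : V → ℕ → Bool => ω x i := by fun_prop
  have hprob (x : V) : IsProbabilityMeasure (μ.map fun ω => ω x i) :=
    Measure.isProbabilityMeasure_map (hmeas x).aemeasurable
  have htrue : μ.map (fun ω => ω v i) {true} = μ.map (fun ω => ω w i) {true} := by
    rw [Measure.map_apply (hmeas v) (measurableSet_singleton _),
      Measure.map_apply (hmeas w) (measurableSet_singleton _)]
    exact (hμ.2.2 v i).trans (hμ.2.2 w i).symm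
  refine ⟨(hmeas v).aemeasurable, (hmeas w).aemeasurable, Measure.ext_of_singleton fun b => ?_⟩
  cases b with
  | true => exact htrue
  | false =>
    have hfalse : ({false} : Set Bool) = {true}ᶜ := (Bool.compl_singleton true).symm
    rw [hfalse, prob_compl_eq_one_sub (measurableSet_singleton _),
      prob_compl_eq_one_sub (measurableSet_singleton _), htrue]

theorem IsLabelMeasure.isIIDLabelMeasure (hμ : IsLabelMeasure μ p₀ p) :
    IsIIDLabelMeasure μ where
  iIndepFun_eval := iIndepFun_curry (by fun_prop) hμ.iIndepFun_label
  identDistrib_eval v w :=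
    .pi (hμ.identDistrib_label v w)
      (hμ.iIndepFun_label.precomp (Prod.mk_right_injective v))
      (hμ.iIndepFun_label.precomp (Prod.mk_right_injective w))

theorem IsLabelMeasure.measure_zero_notMem_ne_zero (hμ : IsLabelMeasure μ p₀ p) (hp₀ : p₀ < 1)
    (v : V) : μ {ω | 0 ∉ labels ω v} ≠ 0 := by
  have := hμ.1
  have hmeas : MeasurableSet {ω : V → ℕ → Bool | ω v 0 = true} := by measurability
  have hcompl : {ω : V → ℕ → Bool | 0 ∉ labels ω v} = {ω | ω v 0 = true}ᶜ := rfl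
  rw [hcompl, Ne, prob_compl_eq_zero_iff hmeas, hμ.2.2]
  simpa using hp₀.ne

end IsLabelMeasure

section Measurability

variable {n : ℕ} {u v : V} {s D : Set V}

theorem measurable_existsUnique {Ω ι : Type*} [Countable ι] {_ : MeasurableSpace Ω}
    {p : ι → Ω → Prop} (hp : ∀ i, Measurable (p i)) : Measurable fun ω => ∃! i, p i ω := by
  unfold ExistsUnique
  fun_prop

theorem measurable_branchRelevant_succ {Ω : Type*} {_ : MeasurableSpace Ω}
    [Finite (G.neighborSet v)] {S : Ω → V → Set ℕ}
    (hparent : Measurable fun ω => BranchRelevant G (S ω) n u v)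
    (hlabel : Measurable fun ω => n + 1 ∈ S ω v)
    (hchild : ∀ w ∈ G.neighborSet v \ {u}, Measurable fun ω => BranchRelevant G (S ω) n v w) :
    Measurable fun ω => BranchRelevant G (S ω) (n + 1) u v :=
  hparent.or (hlabel.and (measurable_existsUnique fun w : ↥(G.neighborSet v \ {u}) =>
    hchild w w.2))

theorem measurable_quiet {Ω : Type*} {_ : MeasurableSpace Ω} [Finite s] {S : Ω → V → Set ℕ}
    (hlabel : Measurable fun ω => 0 ∈ S ω v)
    (hchild : ∀ w ∈ s, Measurable fun ω => BranchRelevant G (S ω) n v w) :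
    Measurable fun ω => Quiet G (S ω) n v s :=
  hlabel.not.and (Measurable.forall fun w => (hchild w w.2).not)

theorem measurable_mem_labels (hv : v ∈ D) (i : ℕ) :
    Measurable[cylinderEvents D] fun ω : V → ℕ → Bool => i ∈ labels ω v :=
  (Measurable.of_discrete (f := (· = true))).comp
    ((measurable_pi_apply i).comp (measurable_cylinderEvent_apply hv))

variable [∀ v, Finite (G.neighborSet v)]

theorem measurable_branchRelevant_labels (hg : (g : ℕ∞) ≤ G.egirth) (hn : n + 1 < g)
    (huv : G.Adj u v) :
    Measurable[cylinderEvents (branch G n u v)] fun ω => BranchRelevant G (labels ω) n u v := by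
  induction n generalizing u v with
  | zero => exact measurable_mem_labels (self_mem_branch huv.ne) 0
  | succ n ih =>
    refine measurable_branchRelevant_succ
      ((ih (by lia) huv).mono (cylinderEvents_mono (branch_mono n.le_succ)) le_rfl)
      (measurable_mem_labels (self_mem_branch huv.ne) (n + 1)) fun w hw => ?_
    exact (ih (by lia) hw.1).mono
      (cylinderEvents_mono (branch_subset_branch_succ hg hn huv hw)) le_rfl

theorem measurable_quiet_labels (hg : (g : ℕ∞) ≤ G.egirth) (hn : n + 2 < g) (huv : G.Adj u v) :
    Measurable[cylinderEvents (branch G (n + 1) u v)]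
      fun ω => Quiet G (labels ω) n v (G.neighborSet v \ {u}) :=
  measurable_quiet (measurable_mem_labels (self_mem_branch huv.ne) 0) fun _ hw =>
    (measurable_branchRelevant_labels hg (by lia) hw.1).mono
      (cylinderEvents_mono (branch_subset_branch_succ hg hn huv hw)) le_rfl

end Measurability

section Star

variable {μ : Measure (V → ℕ → Bool)} {n : ℕ} {v : V} {s : Set V}

/-- The star of disjoint cells around `v`: the vertex `v` itself, and for every `w ∈ s` the branch
at `w` away from `v`. -/
def starCell (G : SimpleGraph V) (n : ℕ) (v : V) (s : Set V) (o : Option s) : Set V :=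
  o.elim {v} fun w => branch G n v w

theorem pairwise_disjoint_starCell (hg : (g : ℕ∞) ≤ G.egirth) (hn : 2 * n + 2 < g)
    (hs : s ⊆ G.neighborSet v) : Pairwise (Function.onFun Disjoint (starCell G n v s)) := by
  rintro (_ | w) (_ | w') hne
  · exact absurd rfl hne
  · exact disjoint_singleton_left.2 notMem_branch
  · exact disjoint_singleton_right.2 notMem_branch
  · exact disjoint_branch hg hn (hs w.2) (hs w'.2) fun h => hne (congrArg some (Subtype.ext h))

theorem IsIIDLabelMeasure.iIndepFun_of_measurable_starCell (hμ : IsIIDLabelMeasure μ)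
    (hg : (g : ℕ∞) ≤ G.egirth) (hn : 2 * n + 2 < g) (hs : s ⊆ G.neighborSet v) {α : Type*}
    [MeasurableSpace α] {X : Option s → (V → ℕ → Bool) → α}
    (hX : ∀ o, Measurable[cylinderEvents (starCell G n v s o)] (X o)) : iIndepFun X μ := by
  have hcells : iIndep (fun o => cylinderEvents (starCell G n v s o)) μ :=
    iIndep_iSup_of_pairwise_disjoint (fun w => (measurable_pi_apply w).comap_le)
      hμ.iIndepFun_eval (pairwise_disjoint_starCell hg hn hs)
  rw [iIndepFun_iff_iIndep]
  exact iIndep_of_iIndep_of_le hcells fun o => (hX o).comap_le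

/-- The data from which the fate of `v` up to time `n + 1` is determined when only its neighbours
in `s` are taken into account: its label set, and for every `w ∈ s` the evolution of `w` up to time
`n` in its branch away from `v`. The latter is frozen at time `n` so that it depends on finitely
many generations of the branch only. -/
def starProcess (G : SimpleGraph V) (S : V → Set ℕ) (n : ℕ) (v : V) (s : Set V) :
    Option s → ℕ → Prop
  | none => fun i => i ∈ S v
  | some w => fun i => BranchRelevant G S (min i n) v w

/-- The evolution of the root of a star as a function of its own labels `x none` and of the
evolutions `x (some j)` of its children: it becomes relevant at a label that appears when exactly
one child is relevant. -/
def rootRelevant {ι : Type*} (x : Option ι → ℕ → Prop) : ℕ → Prop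
  | 0 => x none 0
  | n + 1 => rootRelevant x n ∨ (x none (n + 1) ∧ ∃! j, x (some j) n)

theorem measurable_rootRelevant {ι : Type*} [Countable ι] :
    Measurable (rootRelevant : (Option ι → ℕ → Prop) → ℕ → Prop) := by
  refine measurable_pi_iff.2 fun n => ?_
  have heval (o : Option ι) (i : ℕ) : Measurable fun x : Option ι → ℕ → Prop => x o i := by
    fun_prop
  induction n with
  | zero => exact heval none 0
  | succ n ih =>
    exact ih.or ((heval none _).and (measurable_existsUnique fun j => heval (some j) n))

theorem rootRelevant_comp_optionMap {ι κ : Type*} (e : ι ≃ κ) (x : Option κ → ℕ → Prop) :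
    rootRelevant (x ∘ Option.map e) = rootRelevant x := by
  funext n
  induction n with
  | zero => rfl
  | succ n ih => simp only [rootRelevant, ih, Function.comp_apply, Option.map_none,
      Option.map_some, e.bijective.existsUnique_iff (p := fun j => x (some j) n)]

theorem branchRelevant_eq_rootRelevant {S : V → Set ℕ} {u : V} {i : ℕ} (hi : i ≤ n + 1) :
    BranchRelevant G S i u v = rootRelevant (starProcess G S n v (G.neighborSet v \ {u})) i := by
  induction i with
  | zero => rfl
  | succ i ih =>
    have hin : min i n = i := min_eq_left (by lia)
    simp only [BranchRelevant, rootRelevant, ih (by lia), starProcess, hin]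

/-- The trajectories which a member `o` of a star may follow up to time `n` if the star is quiet:
the root must not have the label `0`, and a child must not be relevant at time `n`. -/
def quietTrajectories {ι : Type*} (n : ℕ) (o : Option ι) : Set (ℕ → Prop) :=
  {x | ¬ x (o.elim 0 fun _ => n)}

theorem measurableSet_quietTrajectories {ι : Type*} (o : Option ι) :
    MeasurableSet (quietTrajectories n o) :=
  (measurable_pi_apply _).not.setOf

theorem quiet_iff_starProcess_mem {S : V → Set ℕ} :
    Quiet G S n v s ↔ ∀ o, starProcess G S n v s o ∈ quietTrajectories n o := by
  simp [Quiet, starProcess, quietTrajectories, Option.forall]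

theorem measurable_starProcess [∀ v, Finite (G.neighborSet v)] (hg : (g : ℕ∞) ≤ G.egirth)
    (hn : n + 1 < g) (hs : s ⊆ G.neighborSet v) (o : Option s) :
    Measurable[cylinderEvents (starCell G n v s o)]
      fun ω => starProcess G (labels ω) n v s o := by
  refine @measurable_pi_lambda _ _ _ (_) _ _ fun i => ?_
  cases o with
  | none => exact measurable_mem_labels (mem_singleton v) i
  | some w =>
    exact (measurable_branchRelevant_labels hg (by lia) (hs w.2)).mono
      (cylinderEvents_mono (branch_mono (min_le_right i n))) le_rfl

end Star

section Homogeneity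

variable {μ : Measure (V → ℕ → Bool)} {r n : ℕ} {u v u' v' : V} {s s' : Set V}

theorem IsRegular.nonempty_equiv_neighborSet_sdiff [∀ v, Finite (G.neighborSet v)]
    (hreg : IsRegular G r) (huv : G.Adj u v) (huv' : G.Adj u' v') :
    Nonempty (↥(G.neighborSet v \ {u}) ≃ ↥(G.neighborSet v' \ {u'})) := by
  have hcard {u v : V} (huv : G.Adj u v) : (G.neighborSet v \ {u}).ncard = r - 1 := by
    rw [Set.ncard_sdiff_singleton_of_mem ((G.mem_neighborSet v u).2 huv.symm), hreg v]
  exact Finite.card_eq.1 ((hcard huv).trans (hcard huv').symm)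

theorem IsIIDLabelMeasure.identDistrib_labels (hμ : IsIIDLabelMeasure μ) (v v' : V) :
    IdentDistrib (fun ω i => i ∈ labels ω v) (fun ω i => i ∈ labels ω v') μ μ :=
  have hmeas : Measurable fun (f : ℕ → Bool) (i : ℕ) => f i = true :=
    measurable_pi_lambda _ fun i =>
      (Measurable.of_discrete (f := fun b : Bool => b = true)).comp (measurable_pi_apply i)
  (hμ.identDistrib_eval v v').comp hmeas

variable [∀ v, Finite (G.neighborSet v)]

theorem IsIIDLabelMeasure.iIndepFun_starProcess (hμ : IsIIDLabelMeasure μ)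
    (hg : (g : ℕ∞) ≤ G.egirth) (hn : 2 * n + 2 < g) (hs : s ⊆ G.neighborSet v) :
    iIndepFun (fun o ω => starProcess G (labels ω) n v s o) μ :=
  hμ.iIndepFun_of_measurable_starCell hg hn hs (measurable_starProcess hg (by lia) hs)

theorem IsIIDLabelMeasure.identDistrib_starProcess (hμ : IsIIDLabelMeasure μ)
    (hg : (g : ℕ∞) ≤ G.egirth) (hn : 2 * n + 2 < g) (hs : s ⊆ G.neighborSet v)
    (hs' : s' ⊆ G.neighborSet v') (e : s ≃ s')
    (he : ∀ w : s, IdentDistrib (fun ω i => BranchRelevant G (labels ω) (min i n) v w)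
      (fun ω i => BranchRelevant G (labels ω) (min i n) v' (e w)) μ μ) :
    IdentDistrib (fun ω => starProcess G (labels ω) n v s)
      (fun ω => starProcess G (labels ω) n v' s' ∘ Option.map e) μ μ := by
  have : Countable s := (Set.Finite.subset (Set.toFinite _) hs).countable
  refine .pi (fun o => ?_) (hμ.iIndepFun_starProcess hg hn hs)
    ((hμ.iIndepFun_starProcess hg hn hs').precomp (Option.map_injective e.injective))
  cases o with
  | none => exact hμ.identDistrib_labels v v'
  | some w => exact he w

theorem IsIIDLabelMeasure.identDistrib_branchRelevant (hμ : IsIIDLabelMeasure μ)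
    (hreg : IsRegular G r) (hg : (g : ℕ∞) ≤ G.egirth) (hn : 2 * n < g)
    (huv : G.Adj u v) (huv' : G.Adj u' v') :
    IdentDistrib (fun ω i => BranchRelevant G (labels ω) (min i n) u v)
      (fun ω i => BranchRelevant G (labels ω) (min i n) u' v') μ μ := by
  induction n generalizing u v u' v' with
  | zero =>
    simp only [Nat.min_zero, BranchRelevant]
    exact (hμ.identDistrib_labels v v').comp (u := fun x _ => x 0)
      (measurable_pi_lambda _ fun _ => measurable_pi_apply 0)
  | succ n ih =>
    obtain ⟨e⟩ := hreg.nonempty_equiv_neighborSet_sdiff huv huv'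
    have hstar := hμ.identDistrib_starProcess hg (by lia) sdiff_subset sdiff_subset e
      fun w => ih (by lia) w.2.1 (e w).2.1
    have hroot := hstar.comp (u := fun x i => rootRelevant x (min i (n + 1)))
      (measurable_pi_lambda _ fun _ => (measurable_pi_apply _).comp measurable_rootRelevant)
    simp only [Function.comp_def (fun x _ => rootRelevant x _), rootRelevant_comp_optionMap]
      at hroot
    simpa only [← branchRelevant_eq_rootRelevant (min_le_right _ _)] using hroot

theorem IsIIDLabelMeasure.measure_branchRelevant_congr (hμ : IsIIDLabelMeasure μ)
    (hreg : IsRegular G r) (hg : (g : ℕ∞) ≤ G.egirth) (hn : 2 * n < g)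
    (huv : G.Adj u v) (huv' : G.Adj u' v') :
    μ {ω | ¬ BranchRelevant G (labels ω) n u v}
      = μ {ω | ¬ BranchRelevant G (labels ω) n u' v'} := by
  have hlast := (hμ.identDistrib_branchRelevant hreg hg hn huv huv').comp (measurable_pi_apply n)
  simpa [Set.preimage] using hlast.measure_mem_eq (MeasurableSet.of_discrete (s := {False}))

theorem IsIIDLabelMeasure.measure_quiet_congr (hμ : IsIIDLabelMeasure μ)
    (hreg : IsRegular G r) (hg : (g : ℕ∞) ≤ G.egirth) (hn : 2 * n + 2 < g)
    (huv : G.Adj u v) (huv' : G.Adj u' v') :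
    μ {ω | Quiet G (labels ω) n v (G.neighborSet v \ {u})}
      = μ {ω | Quiet G (labels ω) n v' (G.neighborSet v' \ {u'})} := by
  obtain ⟨e⟩ := hreg.nonempty_equiv_neighborSet_sdiff huv huv'
  have hstar := hμ.identDistrib_starProcess hg hn sdiff_subset sdiff_subset e
    fun w => hμ.identDistrib_branchRelevant hreg hg (by lia) w.2.1 (e w).2.1
  have hmeas : MeasurableSet {x : Option ↥(G.neighborSet v \ {u}) → ℕ → Prop |
      ∀ o, x o ∈ quietTrajectories n o} := by
    simp only [ofPred_forall]
    exact .iInter fun o => measurable_pi_apply o (measurableSet_quietTrajectories o)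
  have hrelabel (S : V → Set ℕ) : Quiet G S n v' (G.neighborSet v' \ {u'}) ↔
      ∀ o, starProcess G S n v' (G.neighborSet v' \ {u'}) (Option.map e o) ∈
        quietTrajectories n o := by
    simp only [quiet_iff_starProcess_mem, Option.forall]
    exact and_congr_right' e.surjective.forall
  simp only [quiet_iff_starProcess_mem (s := G.neighborSet v \ {u}), hrelabel]
  exact hstar.measure_mem_eq hmeas

theorem IsIIDLabelMeasure.measure_quiet_ne_zero (hμ : IsIIDLabelMeasure μ)
    (hzero : ∀ v, μ {ω | 0 ∉ labels ω v} ≠ 0) (hg : (g : ℕ∞) ≤ G.egirth) (hn : 2 * n + 2 < g)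
    (hs : s ⊆ G.neighborSet v)
    (hbranch : ∀ w ∈ s, μ {ω | ¬ BranchRelevant G (labels ω) n v w} ≠ 0) :
    μ {ω | Quiet G (labels ω) n v s} ≠ 0 := by
  have := Fintype.ofFinite (G.neighborSet v)
  have := Fintype.ofInjective _ (inclusion_injective hs)
  have hprod := (hμ.iIndepFun_starProcess hg hn hs).meas_iInter
    fun o => ⟨quietTrajectories n o, measurableSet_quietTrajectories o, rfl⟩
  simp only [quiet_iff_starProcess_mem, ofPred_forall]
  exact hprod ▸ Finset.prod_ne_zero_iff.2 fun o _ => by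
    cases o with
    | none => exact hzero v
    | some w => simpa [starProcess, quietTrajectories] using hbranch w w.2

theorem IsIIDLabelMeasure.measure_not_branchRelevant_ne_zero (hμ : IsIIDLabelMeasure μ)
    (hzero : ∀ v, μ {ω | 0 ∉ labels ω v} ≠ 0) (hg : (g : ℕ∞) ≤ G.egirth) (hn : 2 * n < g)
    (huv : G.Adj u v) :
    μ {ω | ¬ BranchRelevant G (labels ω) n u v} ≠ 0 := by
  induction n generalizing u v with
  | zero => exact hzero v
  | succ n ih =>
    have hquiet := hμ.measure_quiet_ne_zero hzero hg (by lia) sdiff_subset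
      fun w (hw : w ∈ G.neighborSet v \ {u}) => ih (by lia) hw.1
    exact fun h => hquiet (measure_mono_null (fun ω => Quiet.not_branchRelevant_succ) h)

end Homogeneity

section Conditioning

variable {μ : Measure (V → ℕ → Bool)} {r n : ℕ} {u v u' v' : V}

theorem WEv_eq_iInter_starProcess :
    WEv G n u = ⋂ o, (fun ω => starProcess G (labels ω) n u (G.neighborSet u) o) ⁻¹'
      quietTrajectories n o := by
  ext ω
  simp [WEv, mem_white_iff_quiet, quiet_iff_starProcess_mem]

theorem WEv_inter_WEv (huv : G.Adj u v) : WEv G n u ∩ WEv G n v =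
    WEv G n u ∩ {ω | Quiet G (labels ω) n v (G.neighborSet v \ {u})} :=
  Set.ext fun _ => and_congr_right fun hu => mem_white_iff_quiet_of_adj huv hu

variable [∀ v, Finite (G.neighborSet v)]

theorem measurable_starProcess_neighborSet (hg : (g : ℕ∞) ≤ G.egirth) (hn : n + 1 < g)
    (o : Option (G.neighborSet u)) :
    Measurable fun ω => starProcess G (labels ω) n u (G.neighborSet u) o :=
  (measurable_starProcess hg hn subset_rfl o).mono cylinderEvents_le_pi le_rfl

theorem measurableSet_WEv (hg : (g : ℕ∞) ≤ G.egirth) (hn : n + 1 < g) :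
    MeasurableSet (WEv G n u) := by
  rw [WEv_eq_iInter_starProcess]
  exact .iInter fun o =>
    measurable_starProcess_neighborSet hg hn o (measurableSet_quietTrajectories o)

theorem measurableSet_not_branchRelevant (hg : (g : ℕ∞) ≤ G.egirth) (hn : n + 1 < g)
    (huv : G.Adj u v) : MeasurableSet {ω | ¬ BranchRelevant G (labels ω) n u v} :=
  ((measurable_branchRelevant_labels hg hn huv).mono cylinderEvents_le_pi le_rfl).not.setOf

theorem IsIIDLabelMeasure.measure_WEv_ne_zero (hμ : IsIIDLabelMeasure μ)
    (hzero : ∀ v, μ {ω | 0 ∉ labels ω v} ≠ 0) (hg : (g : ℕ∞) ≤ G.egirth) (hn : 2 * n + 2 < g) :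
    μ (WEv G n u) ≠ 0 := by
  simp only [WEv, mem_white_iff_quiet]
  exact hμ.measure_quiet_ne_zero hzero hg hn subset_rfl fun w hw =>
    hμ.measure_not_branchRelevant_ne_zero hzero hg (by lia) hw

theorem IsIIDLabelMeasure.iIndepFun_quiet_starProcess (hμ : IsIIDLabelMeasure μ)
    (hg : (g : ℕ∞) ≤ G.egirth) (hn : 2 * n + 4 < g) :
    iIndepFun (fun (o : Option (G.neighborSet u)) ω =>
      (o.elim True fun w => Quiet G (labels ω) n w (G.neighborSet w \ {u}),
        starProcess G (labels ω) n u (G.neighborSet u) o)) μ := by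
  refine hμ.iIndepFun_of_measurable_starCell (n := n + 1) hg (by lia) subset_rfl fun o => ?_
  have hstar := measurable_starProcess hg (by lia : n + 1 < g) subset_rfl o
  cases o with
  | none => exact measurable_const.prodMk hstar
  | some w =>
    exact (measurable_quiet_labels hg (by lia) w.2).prodMk
      (hstar.mono (cylinderEvents_mono (branch_mono n.le_succ)) le_rfl)

theorem IsIIDLabelMeasure.measure_starProcess_mem_ne_zero (hμ : IsIIDLabelMeasure μ)
    (hzero : ∀ v, μ {ω | 0 ∉ labels ω v} ≠ 0) (hg : (g : ℕ∞) ≤ G.egirth) (hn : 2 * n + 2 < g)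
    (o : Option (G.neighborSet u)) :
    μ ((fun ω => starProcess G (labels ω) n u (G.neighborSet u) o) ⁻¹' quietTrajectories n o)
      ≠ 0 :=
  fun h => hμ.measure_WEv_ne_zero hzero hg hn (u := u) <| measure_mono_null
    (WEv_eq_iInter_starProcess.trans_subset (iInter_subset _ o)) h

theorem IsIIDLabelMeasure.iIndepFun_quiet_cond_WEv (hμ : IsIIDLabelMeasure μ)
    (hzero : ∀ v, μ {ω | 0 ∉ labels ω v} ≠ 0) (hg : (g : ℕ∞) ≤ G.egirth) (hn : 2 * n + 4 < g) :
    iIndepFun (fun (w : G.neighborSet u) ω => Quiet G (labels ω) n w (G.neighborSet w \ {u}))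
      μ[|WEv G n u] := by
  rw [WEv_eq_iInter_starProcess]
  exact ((hμ.iIndepFun_quiet_starProcess hg hn).cond
    (measurable_starProcess_neighborSet hg (by lia))
    (hμ.measure_starProcess_mem_ne_zero hzero hg (by lia))
    measurableSet_quietTrajectories).precomp (Option.some_injective _)

theorem IsIIDLabelMeasure.cond_WEv_quiet (hμ : IsIIDLabelMeasure μ)
    (hzero : ∀ v, μ {ω | 0 ∉ labels ω v} ≠ 0) (hg : (g : ℕ∞) ≤ G.egirth) (hn : 2 * n + 4 < g)
    (huv : G.Adj u v) :
    μ[{ω | Quiet G (labels ω) n v (G.neighborSet v \ {u})} | WEv G n u]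
      = μ[{ω | Quiet G (labels ω) n v (G.neighborSet v \ {u})} |
          {ω | ¬ BranchRelevant G (labels ω) n u v}] := by
  have hcond := cond_iInter (s := {some ⟨v, huv⟩})
    (f := fun _ => {ω | Quiet G (labels ω) n v (G.neighborSet v \ {u})})
    (measurable_starProcess_neighborSet hg (by lia)) (hμ.iIndepFun_quiet_starProcess hg hn)
    (fun o ho => ⟨{True}, .of_discrete, by simp [Finset.mem_singleton.1 ho, Set.preimage]⟩)
    (fun o _ => hμ.measure_starProcess_mem_ne_zero hzero hg (by lia) o)
    measurableSet_quietTrajectories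
  rw [← WEv_eq_iInter_starProcess] at hcond
  simpa [starProcess, quietTrajectories, Set.preimage] using hcond

theorem IsIIDLabelMeasure.cond_WEv_quiet_congr (hμ : IsIIDLabelMeasure μ)
    (hzero : ∀ v, μ {ω | 0 ∉ labels ω v} ≠ 0) (hreg : IsRegular G r)
    (hg : (g : ℕ∞) ≤ G.egirth) (hn : 2 * n + 4 < g) (huv : G.Adj u v) (huv' : G.Adj u' v') :
    μ[{ω | Quiet G (labels ω) n v (G.neighborSet v \ {u})} | WEv G n u]
      = μ[{ω | Quiet G (labels ω) n v' (G.neighborSet v' \ {u'})} | WEv G n u'] := by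
  have hsub (u v : V) : {ω | Quiet G (labels ω) n v (G.neighborSet v \ {u})} ⊆
      {ω | ¬ BranchRelevant G (labels ω) n u v} :=
    fun ω h => mt (BranchRelevant.mono n.le_succ) (Quiet.not_branchRelevant_succ h)
  have hratio {u v : V} (huv : G.Adj u v) :
      μ[{ω | Quiet G (labels ω) n v (G.neighborSet v \ {u})} | WEv G n u] =
        (μ {ω | ¬ BranchRelevant G (labels ω) n u v})⁻¹ *
          μ {ω | Quiet G (labels ω) n v (G.neighborSet v \ {u})} := by
    rw [hμ.cond_WEv_quiet hzero hg hn huv,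
      cond_apply (measurableSet_not_branchRelevant hg (by lia) huv), inter_eq_right.2 (hsub u v)]
  rw [hratio huv, hratio huv', hμ.measure_branchRelevant_congr hreg hg (by lia) huv huv',
    hμ.measure_quiet_congr hreg hg (by lia) huv huv']

end Conditioning

section Binomial

open scoped unitInterval

variable {Ω ι : Type*} {m₀ : MeasurableSpace Ω} {P : Measure Ω} {q : I}

theorem hasLaw_bernoulliMeasure_of_measure_setOf_eq [IsProbabilityMeasure P] {E : Ω → Prop}
    (hE : Measurable E) (hq : P.real {ω | E ω} = q) :
    HasLaw E (bernoulliMeasure True False q) P := by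
  have := Measure.isProbabilityMeasure_map (μ := P) hE.aemeasurable
  refine ⟨hE.aemeasurable, Measure.ext_of_measureReal_singleton fun b => ?_⟩
  rw [map_measureReal_apply hE .of_discrete]
  have hcompl : P.real {ω | ¬ E ω} = 1 - q := hq ▸ probReal_compl_eq_one_sub hE.setOf
  by_cases hb : b
  · simp [hb, Set.preimage, hq]
  · simp [hb, Set.preimage, hcompl]

theorem isSetBernoulli_univ_of_iIndepFun [Countable ι] {X : ι → Ω → Prop}
    (hX : ∀ i, Measurable (X i)) (hindep : iIndepFun X P) (hq : ∀ i, P.real {ω | X i ω} = q) :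
    IsSetBernoulli (fun ω => {i | X i ω}) univ q P := by
  have := hindep.isProbabilityMeasure
  have hjoint := hindep.hasLaw_infinitePi
    (fun i => hasLaw_bernoulliMeasure_of_measure_setOf_eq (hX i) (hq i))
    (measurable_pi_lambda _ hX).aemeasurable
  have hset : HasLaw (fun p : ι → Prop => {i | p i}) (setBernoulli univ q)
      (Measure.infinitePi fun _ => bernoulliMeasure True False q) :=
    ⟨MeasurableEquiv.setOfPred.measurable.aemeasurable, by
      simp [setBernoulli_eq_map, bernoulliMeasure_def]⟩
  exact hset.comp hjoint

theorem hasLaw_ncard_of_iIndepFun [Finite ι] {X : ι → Ω → Prop} (hX : ∀ i, Measurable (X i))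
    (hindep : iIndepFun X P) (hq : ∀ i, P.real {ω | X i ω} = q) :
    HasLaw (fun ω => {i | X i ω}.ncard) (binomial (Nat.card ι) q) P := by
  have hcard : HasLaw ncard (binomial (Nat.card ι) q) (setBernoulli (univ : Set ι) q) := by
    refine ⟨measurable_ncard.aemeasurable, Measure.ext_of_singleton fun k => ?_⟩
    rw [map_ncard_setBernoulli_singleton finite_univ, binomial_singleton, ncard_univ]
  exact hcard.comp (isSetBernoulli_univ_of_iIndepFun hX hindep hq)

end Binomial

section WhiteNeighbours

variable {μ : Measure (V → ℕ → Bool)} {r N : ℕ} {u a c : V} {ι : Type*} {v : ι → V}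

theorem IsIIDLabelMeasure.hasLaw_ncard_white [∀ v, Finite (G.neighborSet v)]
    [Finite ι] (hμ : IsIIDLabelMeasure μ) (hzero : ∀ v, μ {ω | 0 ∉ labels ω v} ≠ 0)
    (hreg : IsRegular G r) (hg : (g : ℕ∞) ≤ G.egirth) (hN : 2 * N + 4 < g)
    (hadj : ∀ j, G.Adj u (v j)) (hinj : Function.Injective v) (hac : G.Adj a c)
    {q : unitInterval} (hq : (q : ℝ) = μ[|WEv G N a].real (WEv G N c)) :
    HasLaw (fun ω => {j | v j ∈ White G (labels ω) N}.ncard) (binomial (Nat.card ι) q)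
      μ[|WEv G N u] := by
  have hW (w : V) : MeasurableSet (WEv G N w) := measurableSet_WEv hg (by lia)
  have hquiet (j : ι) : (fun ω => v j ∈ White G (labels ω) N) =ᵐ[μ[|WEv G N u]]
      fun ω => Quiet G (labels ω) N (v j) (G.neighborSet (v j) \ {u}) := by
    filter_upwards [ae_cond_mem (hW u)] with ω hω
    exact propext (mem_white_iff_quiet_of_adj (hadj j) hω)
  have hindep : iIndepFun (fun j ω => v j ∈ White G (labels ω) N) μ[|WEv G N u] :=
    ((hμ.iIndepFun_quiet_cond_WEv hzero hg hN).precomp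
      (g := fun j => ⟨v j, hadj j⟩) fun i j h => hinj (congrArg Subtype.val h)).congr
      fun j => (hquiet j).symm
  have hprob {u v : V} (huv : G.Adj u v) : μ[|WEv G N u] (WEv G N v) =
      μ[{ω | Quiet G (labels ω) N v (G.neighborSet v \ {u})} | WEv G N u] := by
    rw [← cond_inter_self (hW u), WEv_inter_WEv huv, cond_inter_self (hW u)]
  refine hasLaw_ncard_of_iIndepFun (fun j => (hW (v j)).mem) hindep fun j => ?_
  rw [hq, measureReal_def, measureReal_def, hprob hac,
    hμ.cond_WEv_quiet_congr hzero hreg hg hN hac (hadj j), ← hprob (hadj j)]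
  rfl

theorem white_neighbours_binomial_general [∀ v, Finite (G.neighborSet v)]
    [Finite ι] (hμ : IsIIDLabelMeasure μ) (hzero : ∀ v, μ {ω | 0 ∉ labels ω v} ≠ 0)
    (hreg : IsRegular G r) (hg : (g : ℕ∞) ≤ G.egirth) (hN : 2 * N + 4 < g)
    (hadj : ∀ j, G.Adj u (v j)) (hinj : Function.Injective v) (hac : G.Adj a c)
    (k : ℕ) :
    μ[|WEv G N u] {ω | {j | v j ∈ White G (labels ω) N}.ncard = k}
      = ENNReal.ofReal (((Nat.card ι).choose k : ℝ)
          * ((μ (WEv G N a ∩ WEv G N c)).toReal / (μ (WEv G N a)).toReal) ^ k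
          * (1 - (μ (WEv G N a ∩ WEv G N c)).toReal / (μ (WEv G N a)).toReal)
            ^ (Nat.card ι - k)) := by
  let q : unitInterval := ⟨μ[|WEv G N a].real (WEv G N c), measureReal_nonneg, measureReal_le_one⟩
  have hq : (q : ℝ) = (μ (WEv G N a ∩ WEv G N c)).toReal / (μ (WEv G N a)).toReal := by
    have hW : MeasurableSet (WEv G N a) := measurableSet_WEv hg (by lia)
    simp only [q, measureReal_def, cond_apply hW, ENNReal.toReal_mul, ENNReal.toReal_inv,
      div_eq_inv_mul]
  have hlaw := hμ.hasLaw_ncard_white hzero hreg hg hN hadj hinj hac (q := q) rfl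
  rw [hlaw.measure_eq (p := (· = k)) .of_discrete, ← hq]
  exact binomial_singleton _ k q

end WhiteNeighbours

/-- Conditional on `u` being white at time `N`, the number of white
neighbours of `u` at time `N` is binomially distributed `Bin(r, q_N / w_N)`, where `q_N`
and `w_N` are computed from any vertex `a` and neighbour `c`. -/
theorem white_neighbours_binomial
    [Fintype V] (r g : ℕ) (G : SimpleGraph V)
    (hreg : IsRegular G r) (hg : (g : ℕ∞) ≤ G.egirth)
    (p₀ p : ℝ) (hp₀ : p₀ ∈ Ioo (0 : ℝ) 1) (hp : p ∈ Ioo (0 : ℝ) 1)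
    (μ : Measure (V → ℕ → Bool)) (hμ : IsLabelMeasure μ p₀ p)
    (N : ℕ) (hN : 2 * (N + 2) < g - 2)
    (u : V) (v : Fin r → V) (hadj : ∀ j, G.Adj u (v j)) (hinj : Function.Injective v)
    (a c : V) (hac : G.Adj a c)
    (k : ℕ) (hk : k ≤ r) :
    μ[|WEv G N u] {ω | {j : Fin r | v j ∈ White G (labels ω) N}.ncard = k}
      = ENNReal.ofReal ((r.choose k : ℝ)
          * ((μ (WEv G N a ∩ WEv G N c)).toReal / (μ (WEv G N a)).toReal) ^ k
          * (1 - (μ (WEv G N a ∩ WEv G N c)).toReal / (μ (WEv G N a)).toReal) ^ (r - k)) := by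
  simpa using white_neighbours_binomial_general hμ.isIIDLabelMeasure
    (hμ.measure_zero_notMem_ne_zero hp₀.2) hreg hg (by lia) hadj hinj hac k

end InducedForest
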